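/- There exists a DFAwtl M whose accepted language L(M) is regular but whose jump complexity satisfies JC_M(n) ∈ Θ(n). Concretely, the DFAwtl over V={a,b,c} with states {q₀,q₁,q₂}, initial state q₀, final states {q₂}, and transitions δ(q₀,b)=q₀, δ(q₀,c)=q₁, δ(q₁,a)=q₂ (all other transitions undefined) accepts a regular language, and for every n≥0 the word a·bⁿ·c is accepted with jc_M(a·bⁿ·c)=n+1 jumps, so JC_M is not constant-bounded. -/

import Mathlib

/-- A deterministic finite automaton with translucent letters (DFAwtl):
`delta` is a partial transition function, `start` the initial state,
`accept` the set of final states. -/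
structure DFAwtl (Q V : Type*) where
  delta : Q → V → Option Q
  start : Q
  accept : Set Q

namespace DFAwtl

variable {Q V : Type*}

/-- Sequential step: `(s, a·y) → (p, y)` when `δ(s,a) = p`. -/
def SeqStep (M : DFAwtl Q V) (c c' : Q × List V) : Prop :=
  ∃ a : V, c.2 = a :: c'.2 ∧ M.delta c.1 a = some c'.1

/-- Jumping step: `(s, x·a·y) ↻ (p, x·y)` when `x ≠ ε`, `δ(s,a) = p`, and
`δ(s,b)` is undefined for every letter `b` occurring in `x`. -/
def JumpStep (M : DFAwtl Q V) (c c' : Q × List V) : Prop :=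
  ∃ (x y : List V) (a : V), x ≠ [] ∧ c.2 = x ++ a :: y ∧ c'.2 = x ++ y ∧
    M.delta c.1 a = some c'.1 ∧ ∀ b ∈ x, M.delta c.1 b = none

/-- Either a sequential or a jumping step. -/
def Step (M : DFAwtl Q V) (c c' : Q × List V) : Prop :=
  M.SeqStep c c' ∨ M.JumpStep c c'

/-- Reflexive–transitive closure of sequential steps (the relation `→*`). -/
def SeqSteps (M : DFAwtl Q V) : Q × List V → Q × List V → Prop :=
  Relation.ReflTransGen M.SeqStep

/-- Reflexive–transitive closure of all steps (the relation `⊨*`). -/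
def Steps (M : DFAwtl Q V) : Q × List V → Q × List V → Prop :=
  Relation.ReflTransGen M.Step

/-- `StepsN M c c' k` : configuration `c'` is reachable from `c` by a computation
containing exactly `k` jumping steps. -/
inductive StepsN (M : DFAwtl Q V) : Q × List V → Q × List V → ℕ → Prop
  | refl (c : Q × List V) : StepsN M c c 0
  | seq {c c' c'' : Q × List V} {n : ℕ} :
      M.SeqStep c c' → StepsN M c' c'' n → StepsN M c c'' n
  | jump {c c' c'' : Q × List V} {n : ℕ} :
      M.JumpStep c c' → StepsN M c' c'' n → StepsN M c c'' (n + 1)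

/-- The language accepted by `M`. -/
def lang (M : DFAwtl Q V) : Set (List V) :=
  {w | ∃ f ∈ M.accept, M.Steps (M.start, w) (f, [])}

/-- `M` accepts `w` by a computation with exactly `k` jumping steps. -/
def AcceptsIn (M : DFAwtl Q V) (w : List V) (k : ℕ) : Prop :=
  ∃ f ∈ M.accept, M.StepsN (M.start, w) (f, []) k

/-- The jump complexity of a word: the (for a deterministic machine, unique)
number of jumping steps in an accepting computation on `w`. -/
noncomputable def jc (M : DFAwtl Q V) (w : List V) : ℕ :=
  sInf {k | M.AcceptsIn w k}

/-- The jump complexity function: the maximal number of jumps over accepted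
words of length `n`. -/
noncomputable def JC (M : DFAwtl Q V) (n : ℕ) : ℕ :=
  sSup {k | ∃ w ∈ M.lang, w.length = n ∧ M.jc w = k}

/-- `JC_M` is bounded by a constant. -/
def ConstBounded (M : DFAwtl Q V) : Prop :=
  ∃ c : ℕ, ∀ w ∈ M.lang, M.jc w ≤ c

/-- Extended (sequential) transition function on words. -/
def deltaStar (M : DFAwtl Q V) (q : Q) (w : List V) : Option Q :=
  w.foldl (fun o a => o.bind fun p => M.delta p a) (some q)

/-- A state `q` is `a`-deficient if `δ(q,a)` is undefined. -/
def Deficient (M : DFAwtl Q V) (q : Q) (a : V) : Prop :=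
  M.delta q a = none

/-- The set `⟨q,a⟩` (empty when `δ(q,a)` is defined). -/
def angleSet (M : DFAwtl Q V) (q : Q) (a : V) : Set Q :=
  {s | M.delta q a = none ∧ ∃ x : List V, x ≠ [] ∧
    M.SeqSteps (q, x) (s, []) ∧ M.Steps (s, a :: x) (q, [])}

/-- The set `[q,a]` (empty when `δ(q,a)` is defined). -/
def bracketSet (M : DFAwtl Q V) (q : Q) (a : V) : Set Q :=
  {s | M.delta q a = none ∧ ∃ x : List V, x ≠ [] ∧
    M.SeqSteps (q, x) (s, []) ∧ M.SeqSteps (s, a :: x) (q, [])}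

/-- Every state of the automaton is useful. -/
def AllUseful (M : DFAwtl Q V) : Prop :=
  ∀ q : Q, (∃ x : List V, M.SeqSteps (M.start, x) (q, [])) ∧
    (∃ (y : List V) (f : Q), f ∈ M.accept ∧ M.SeqSteps ((q : Q), y) (f, []))

/-- `δ(q,x')` is `a`-deficient for every prefix `x'` of `x`. -/
def PrefixDeficient (M : DFAwtl Q V) (q : Q) (a : V) (x : List V) : Prop :=
  ∀ x' : List V, ∀ p : Q, x' <+: x → M.deltaStar q x' = some p → M.delta p a = none

/-- `δ(q,y')` is `a`-deficient for every proper prefix `y'` of `y`. -/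
def ProperPrefixDeficient (M : DFAwtl Q V) (q : Q) (a : V) (y : List V) : Prop :=
  ∀ y' : List V, ∀ p : Q, y' <+: y → y' ≠ y → M.deltaStar q y' = some p → M.delta p a = none

/-- The condition of Claim 2: a pair `(q,a)` with `δ(q,a)` undefined, a nonempty
cycle in `q` visiting only `a`-deficient states, and an accepting path from `q`
reading a word `y` without `a` through `a`-deficient states and then an `a`. -/
def ClaimTwoCondition (M : DFAwtl Q V) (q : Q) (a : V) : Prop :=
  M.delta q a = none ∧
  (∃ x : List V, x ≠ [] ∧ M.SeqSteps (q, x) (q, []) ∧ M.PrefixDeficient q a x) ∧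
  (∃ (y z : List V) (f : Q), a ∉ y ∧ f ∈ M.accept ∧
    M.SeqSteps (q, y ++ a :: z) (f, []) ∧ M.ProperPrefixDeficient q a y)

end DFAwtl

namespace DFAwtl

variable {Q V : Type*}

/-- `p 0, p 1, …, p n = p 0` is a circuit in the transition graph of `M`,
with the `i`-th edge labelled by the letter `a i`. -/
def IsCircuit (M : DFAwtl Q V) (n : ℕ) (p : ℕ → Q) (a : ℕ → V) : Prop :=
  0 < n ∧ p n = p 0 ∧ ∀ i < n, M.delta (p i) (a i) = some (p (i + 1))

/-- The circuit is `x`-jumping: every state of the circuit from which an `x` is read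
is `b`-deficient for some letter `b`, and at least one edge is labelled by a letter
other than `x`. -/
def IsXJumpingCircuit (M : DFAwtl Q V) (n : ℕ) (p : ℕ → Q) (a : ℕ → V) (x : V) : Prop :=
  M.IsCircuit n p a ∧ (∀ i < n, a i = x → ∃ b : V, M.delta (p i) b = none) ∧
    ∃ i < n, a i ≠ x

/-- The state `q` is reachable from the initial state. -/
def ReachableState (M : DFAwtl Q V) (q : Q) : Prop :=
  ∃ u : List V, M.Steps (M.start, u) (q, [])

end DFAwtl
-- end preamble

/-- The DFAwtl over `{a,b,c}` (with `a = 0`, `b = 1`, `c = 2`) with states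
`q₀ = 0`, `q₁ = 1`, `q₂ = 2`, initial state `q₀`, final state `q₂`, and transitions
`δ(q₀,b) = q₀`, `δ(q₀,c) = q₁`, `δ(q₁,a) = q₂` (all other transitions undefined). -/
def exampleM : DFAwtl (Fin 3) (Fin 3) :=
  { delta := ![![none, some 0, some 1], ![some 2, none, none], ![none, none, none]]
    start := 0
    accept := {2} }

theorem ex_step {c c' : Fin 3 × List (Fin 3)} (h : exampleM.Step c c') :
    ∃ (x y : List (Fin 3)) (a : Fin 3), c.2 = x ++ a :: y ∧ c'.2 = x ++ y ∧
      exampleM.delta c.1 a = some c'.1 ∧ ∀ b ∈ x, exampleM.delta c.1 b = none := by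
  rcases h with ⟨a, h1, h2⟩ | ⟨x, y, a, -, h1, h2, h3, h4⟩
  · exact ⟨[], c'.2, a, by simpa using h1, rfl, h2, by simp⟩
  · exact ⟨x, y, a, h1, h2, h3, h4⟩

def exD : DFA (Fin 3) (Fin 5) where
  step := ![![1, 0, 2], ![4, 1, 3], ![3, 4, 4], ![4, 4, 4], ![4, 4, 4]]
  start := 0
  accept := {3}

def exS (c : Fin 3 × List (Fin 3)) : Prop :=
  (c.1 = 0 ∧ exD.evalFrom 0 c.2 = 3) ∨ (c.1 = 1 ∧ c.2 = [0]) ∨ (c.1 = 2 ∧ c.2 = [])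

theorem exD_cons (s : Fin 5) (a : Fin 3) (w : List (Fin 3)) :
    exD.evalFrom s (a :: w) = exD.evalFrom (exD.step s a) w := rfl

theorem exD_four (w : List (Fin 3)) : exD.evalFrom 4 w = 4 := by
  induction w with
  | nil => rfl
  | cons a w ih =>
    have : ∀ a, exD.step 4 a = 4 := by decide
    rw [exD_cons, this, ih]

theorem exD_three (w : List (Fin 3)) (h : exD.evalFrom 3 w = 3) : w = [] := by
  cases w with
  | nil => rfl
  | cons a w =>
    have : ∀ a, exD.step 3 a = 4 := by decide
    rw [exD_cons, this, exD_four] at h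
    exact absurd h (by decide)

theorem exD_zeros (x : List (Fin 3)) (hx : ∀ b ∈ x, b = 0) (s : Fin 5)
    (hs : s = 0 ∨ s = 1 ∨ s = 4) :
    exD.evalFrom s x = 0 ∨ exD.evalFrom s x = 1 ∨ exD.evalFrom s x = 4 := by
  induction x generalizing s with
  | nil => exact hs
  | cons a x ih =>
    obtain rfl := hx a (by simp)
    rw [exD_cons]
    apply ih (fun b hb => hx b (by simp [hb]))
    rcases hs with rfl | rfl | rfl <;> decide

theorem ex_d0 : ∀ b, exampleM.delta 0 b = none → b = 0 := by
  intro b; fin_cases b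
  · intro _; rfl
  · intro h; exact absurd h (by simp [exampleM])
  · intro h; exact absurd h (by simp [exampleM])

theorem exS_back {c c' : Fin 3 × List (Fin 3)} (h : exampleM.Step c c') (hS : exS c') :
    exS c := by
  obtain ⟨x, y, a, h1, h2, h3, h4⟩ := ex_step h
  obtain ⟨q, w⟩ := c
  obtain ⟨q', w'⟩ := c'
  simp only at h1 h2 h3 h4
  subst h1 h2
  have key : (q = 0 ∧ a = 1 ∧ q' = 0) ∨ (q = 0 ∧ a = 2 ∧ q' = 1) ∨ (q = 1 ∧ a = 0 ∧ q' = 2) := by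
    clear h4 h hS
    revert h3
    revert q a q'
    unfold exampleM
    decide
  rcases key with ⟨rfl, rfl, rfl⟩ | ⟨rfl, rfl, rfl⟩ | ⟨rfl, rfl, rfl⟩
  · have hx : ∀ b ∈ x, b = 0 := fun b hb => ex_d0 b (h4 b hb)
    left
    refine ⟨rfl, ?_⟩
    have hS' : exD.evalFrom 0 (x ++ y) = 3 := by simpa [exS] using hS
    rw [DFA.evalFrom_of_append] at hS' ⊢
    rw [exD_cons]
    rcases exD_zeros x hx 0 (Or.inl rfl) with e | e | e <;> rw [e] at hS' ⊢ <;> exact hS'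
  · have hS' : x ++ y = [0] := by simpa [exS] using hS
    left
    refine ⟨rfl, ?_⟩
    rcases x with _ | ⟨b, x⟩
    · simp only [List.nil_append] at hS'
      subst hS'; decide
    · simp at hS'
      obtain ⟨rfl, rfl, rfl⟩ := hS'
      decide
  · have hS' : x ++ y = [] := by simpa [exS] using hS
    simp at hS'
    obtain ⟨rfl, rfl⟩ := hS'
    right; left; exact ⟨rfl, rfl⟩

theorem ex_sound {c : Fin 3 × List (Fin 3)} (h : exampleM.Steps c (2, [])) : exS c := by
  induction h using Relation.ReflTransGen.head_induction_on with
  | refl => right; right; exact ⟨rfl, rfl⟩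
  | head h _ ih => exact exS_back h ih

theorem ex_seq {q p : Fin 3} {a : Fin 3} {w : List (Fin 3)}
    (h : exampleM.delta q a = some p) : exampleM.Step (q, a :: w) (p, w) :=
  Or.inl ⟨a, rfl, h⟩

theorem ex_jmp {q p : Fin 3} {a b : Fin 3} {w : List (Fin 3)}
    (h : exampleM.delta q a = some p) (hb : exampleM.delta q b = none) :
    exampleM.JumpStep (q, b :: a :: w) (p, b :: w) :=
  ⟨[b], w, a, by simp, rfl, rfl, h, by simpa using hb⟩

theorem ex_complete (w : List (Fin 3)) :
    (exD.evalFrom 0 w = 3 → exampleM.Steps (0, w) (2, [])) ∧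
    (exD.evalFrom 1 w = 3 → exampleM.Steps (0, 0 :: w) (2, [])) ∧
    (exD.evalFrom 2 w = 3 → exampleM.Steps (1, w) (2, [])) := by
  induction w with
  | nil => refine ⟨fun h => ?_, fun h => ?_, fun h => ?_⟩ <;> exact absurd h (by decide)
  | cons a w ih =>
    obtain ⟨i0, i1, i2⟩ := ih
    have e4 : ¬ exD.evalFrom 4 w = 3 := by rw [exD_four]; decide
    refine ⟨fun h => ?_, fun h => ?_, fun h => ?_⟩ <;> rw [exD_cons] at h <;>
      match a, h with
      | 0, h => ?_
      | 1, h => ?_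
      | 2, h => ?_
    · exact i1 h
    · exact Relation.ReflTransGen.head (ex_seq rfl) (i0 h)
    · exact Relation.ReflTransGen.head (ex_seq rfl) (i2 h)
    · exact absurd h e4
    · exact Relation.ReflTransGen.head (Or.inr (ex_jmp rfl rfl)) (i1 h)
    · obtain rfl := exD_three w h
      exact Relation.ReflTransGen.head (Or.inr (ex_jmp rfl rfl))
        (Relation.ReflTransGen.single (ex_seq rfl))
    · obtain rfl := exD_three w h
      exact Relation.ReflTransGen.single (ex_seq rfl)
    · exact absurd h e4
    · exact absurd h e4

theorem ex_mem (w : List (Fin 3)) : w ∈ exampleM.lang ↔ exD.evalFrom 0 w = 3 := by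
  constructor
  · rintro ⟨f, hf, h⟩
    obtain rfl : f = 2 := hf
    simpa [exS, exampleM] using ex_sound h
  · intro h
    exact ⟨2, rfl, (ex_complete w).1 h⟩

theorem ex_word (n : ℕ) : (0 :: (List.replicate n 1 ++ [2])) ∈ exampleM.lang := by
  rw [ex_mem, exD_cons]
  induction n with
  | zero => decide
  | succ n ih => exact ih

theorem ex_upper (n : ℕ) :
    exampleM.StepsN (0, 0 :: (List.replicate n 1 ++ [2])) (2, []) (n + 1) := by
  induction n with
  | zero =>
    exact .jump (ex_jmp (p := 1) rfl rfl) (.seq (c' := (2, [])) ⟨0, rfl, rfl⟩ (.refl _))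
  | succ n ih => exact .jump (ex_jmp rfl rfl) ih

theorem ex_noseq {w : List (Fin 3)} {c : Fin 3 × List (Fin 3)}
    (h : exampleM.SeqStep (0, 0 :: w) c) : False := by
  obtain ⟨a, h1, h2⟩ := h
  simp only [List.cons.injEq] at h1
  obtain ⟨rfl, -⟩ := h1
  simp [exampleM] at h2

theorem ex_jinv {w : List (Fin 3)} {c : Fin 3 × List (Fin 3)}
    (h : exampleM.JumpStep (0, 0 :: 1 :: w) c) : c = (0, 0 :: w) := by
  obtain ⟨q, v⟩ := c
  obtain ⟨x, y, a, h0, h1, h2, h3, h4⟩ := h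
  simp only at h1 h2 h3 h4
  have h4' := fun b hb => ex_d0 b (h4 b hb)
  match x, h0, h1, h2, h4' with
  | [b], _, h1, h2, _ =>
    simp at h1
    obtain ⟨rfl, rfl, rfl⟩ := h1
    simp [exampleM] at h3
    subst h3
    simp [h2]
  | b :: d :: x, _, h1, _, h4' =>
    simp at h1
    have := h4' d (by simp)
    rw [← h1.2.1] at this
    exact absurd this (by decide)

theorem ex_lower (n : ℕ) : ∀ k,
    exampleM.StepsN (0, 0 :: (List.replicate n 1 ++ [2])) (2, []) k → n + 1 ≤ k := by
  induction n with
  | zero =>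
    intro k h
    cases h with
    | seq h _ => exact (ex_noseq h).elim
    | jump h _ => omega
  | succ n ih =>
    intro k h
    cases h with
    | seq h _ => exact (ex_noseq h).elim
    | jump h h' =>
      obtain rfl := ex_jinv h
      have := ih _ h'
      omega

theorem ex_jc (n : ℕ) : exampleM.jc (0 :: (List.replicate n 1 ++ [2])) = n + 1 := by
  have hm : (n + 1) ∈ {k | exampleM.AcceptsIn (0 :: (List.replicate n 1 ++ [2])) k} :=
    ⟨2, rfl, ex_upper n⟩
  apply le_antisymm
  · exact Nat.sInf_le hm
  · obtain ⟨f, hf, h⟩ := Nat.sInf_mem ⟨_, hm⟩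
    obtain rfl : f = 2 := hf
    exact ex_lower n _ h

/-- the automaton above accepts a regular language, yet for every `n`
the word `a·bⁿ·c` is accepted with exactly `n+1` jumps, so its jump complexity is
not constant-bounded, and indeed `JC(n) ∈ Θ(n)` (linear lower bound on the domain,
the upper bound `JC(n) ≤ n` holding trivially). -/
theorem stmt_16 :
    Language.IsRegular (exampleM.lang : Language (Fin 3)) ∧
    (∀ n : ℕ, (0 :: (List.replicate n 1 ++ [2])) ∈ exampleM.lang ∧
      exampleM.jc (0 :: (List.replicate n 1 ++ [2])) = n + 1) ∧
    ¬ exampleM.ConstBounded ∧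
    (∃ c : ℝ, 0 < c ∧ ∀ N : ℕ, ∃ n ≥ N,
      (∃ w ∈ exampleM.lang, w.length = n) ∧
        c * (n : ℝ) ≤ (exampleM.JC n : ℝ)) := by
  refine ⟨?_, fun n => ⟨ex_word n, ex_jc n⟩, ?_, ?_⟩
  · refine ⟨Fin 5, inferInstance, exD, ?_⟩
    ext w
    exact (ex_mem w).symm
  · rintro ⟨c, hc⟩
    have := hc _ (ex_word c)
    rw [ex_jc] at this
    omega
  · refine ⟨1 / 2, by norm_num, fun N => ⟨N + 2, by omega, ⟨_, ex_word N, by simp⟩, ?_⟩⟩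
    have h : N + 1 ≤ exampleM.JC (N + 2) := by
      apply le_csSup
      · apply Set.Finite.bddAbove
        apply ((List.finite_length_eq (Fin 3) (N + 2)).image exampleM.jc).subset
        rintro k ⟨w, -, hl, hk⟩
        exact ⟨w, hl, hk⟩
      · exact ⟨_, ex_word N, by simp, ex_jc N⟩
    have h' : ((N : ℝ) + 1) ≤ (exampleM.JC (N + 2) : ℝ) := by exact_mod_cast h
    have : (0 : ℝ) ≤ N := Nat.cast_nonneg N
    push_cast
    linarith
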